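/- arXiv:cs/0207086 — 2 statements merged into one kernel-verified Lean document; each statement's English description precedes it below -/
import Mathlib

section
/- Completeness of defeasible logic DL: for every propositional defeasible theory T and every conclusion c (of one of the forms +Δq, -Δq, +∂q, -∂q for a literal q), if c holds in every defeasible model of T (that is, for all models M: M_Δ(q)=True when c=+Δq, M_Δ(q)=False when c=-Δq, M_∂(q)=True when c=+∂q, M_∂(q)=False when c=-∂q), then T ⊢ c. -/
/-- A literal is an atom or its negation. -/
inductive Lit (Atom : Type) where
  | pos : Atom → Lit Atom
  | neg : Atom → Lit Atom
  deriving DecidableEq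

/-- The complement `~q` of a literal `q`. -/
def Lit.compl {Atom : Type} : Lit Atom → Lit Atom
  | .pos a => .neg a
  | .neg a => .pos a

/-- The three kinds of rules: strict, defeasible, defeater. -/
inductive RuleKind where
  | strict
  | defeasible
  | defeater
  deriving DecidableEq

/-- A rule: a kind, a finite set of literals as body (antecedent), and a head literal. -/
structure DRule (Atom : Type) where
  kind : RuleKind
  body : Finset (Lit Atom)
  head : Lit Atom
  deriving DecidableEq

/-- A rule is strict-or-defeasible (a "supportive" rule). -/
def DRule.isSd {Atom : Type} (r : DRule Atom) : Prop :=
  r.kind = RuleKind.strict ∨ r.kind = RuleKind.defeasible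

/-- A propositional defeasible theory: finite set of facts, finite set of rules,
and a superiority relation on rules. -/
structure DTheory (Atom : Type) where
  facts : Finset (Lit Atom)
  rules : Finset (DRule Atom)
  sup : DRule Atom → DRule Atom → Prop

/-- Acyclicity of the superiority relation. -/
def SupAcyclic {Atom : Type} (T : DTheory Atom) : Prop :=
  ∀ r : DRule Atom, ¬ Relation.TransGen T.sup r r

/-- Conclusions: tagged literals +Δq, -Δq, +∂q, -∂q. -/
inductive Concl (Atom : Type) where
  | plusDelta : Lit Atom → Concl Atom
  | minusDelta : Lit Atom → Concl Atom
  | plusPartial : Lit Atom → Concl Atom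
  | minusPartial : Lit Atom → Concl Atom
  deriving DecidableEq

/-- The inference rules of DL: `Licensed T prev c` holds when the conclusion `c`
may be appended to a derivation whose preceding part is `prev`. -/
def Licensed {Atom : Type} (T : DTheory Atom)
    (prev : List (Concl Atom)) : Concl Atom → Prop
  | .plusDelta q =>
      q ∈ T.facts ∨
      ∃ r ∈ T.rules, r.kind = RuleKind.strict ∧ r.head = q ∧
        ∀ a ∈ r.body, Concl.plusDelta a ∈ prev
  | .minusDelta q =>
      q ∉ T.facts ∧
      ∀ r ∈ T.rules, r.kind = RuleKind.strict → r.head = q →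
        ∃ a ∈ r.body, Concl.minusDelta a ∈ prev
  | .plusPartial q =>
      (Concl.plusDelta q ∈ prev) ∨
      ((∃ r ∈ T.rules, r.isSd ∧ r.head = q ∧
          ∀ a ∈ r.body, Concl.plusPartial a ∈ prev) ∧
       (Concl.minusDelta q.compl ∈ prev) ∧
       ∀ s ∈ T.rules, s.head = q.compl →
         ((∃ a ∈ s.body, Concl.minusPartial a ∈ prev) ∨
          (∃ t ∈ T.rules, t.isSd ∧ t.head = q ∧ T.sup t s ∧
            ∀ a ∈ t.body, Concl.plusPartial a ∈ prev)))
  | .minusPartial q =>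
      (Concl.minusDelta q ∈ prev) ∧
      ((∀ r ∈ T.rules, r.isSd → r.head = q →
          ∃ a ∈ r.body, Concl.minusPartial a ∈ prev) ∨
       (Concl.plusDelta q.compl ∈ prev) ∨
       (∃ s ∈ T.rules, s.head = q.compl ∧
          (∀ a ∈ s.body, Concl.plusPartial a ∈ prev) ∧
          ∀ t ∈ T.rules, t.isSd → t.head = q →
            ((∃ a ∈ t.body, Concl.minusPartial a ∈ prev) ∨ ¬ T.sup t s)))

/-- A derivation: each element of the sequence is licensed given the preceding part. -/
def DLDerivation {Atom : Type} (T : DTheory Atom)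
    (P : List (Concl Atom)) : Prop :=
  ∀ i : Fin P.length, Licensed T (P.take i) (P.get i)

/-- `T ⊢ c`: some derivation in `T` ends with conclusion `c`. -/
def DLProves {Atom : Type} (T : DTheory Atom) (c : Concl Atom) : Prop :=
  ∃ P : List (Concl Atom), DLDerivation T P ∧ P.getLast? = some c

/-- A defeasible interpretation: two partial functions from literals to booleans
(modelled as `Option Bool`-valued functions), `del` for definite knowledge (Δ) and
`par` for defeasible belief (∂). -/
structure DInterp (Atom : Type) where
  del : Lit Atom → Option Bool
  par : Lit Atom → Option Bool

/-- The coherence conditions on defeasible interpretations: what is known is believed,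
and what is not believed is not known. -/
def DInterp.Coherent {Atom : Type} (I : DInterp Atom) : Prop :=
  (∀ q : Lit Atom, I.del q = some true → I.par q = some true) ∧
  (∀ q : Lit Atom, I.par q = some false → I.del q = some false)

open Classical in
/-- Kleene conjunction of a partial boolean function over a finite set of literals:
`False` if some member maps to `False`, `True` if every member maps to `True`,
undefined otherwise. -/
noncomputable def kleeneAll {Atom : Type} (f : Lit Atom → Option Bool)
    (S : Finset (Lit Atom)) : Option Bool :=
  if ∃ a ∈ S, f a = some false then some false
  else if ∀ a ∈ S, f a = some true then some true
  else none

/-- The four model conditions (MΔ+), (MΔ-), (M∂+), (M∂-). -/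
def ModelConditions {Atom : Type} (T : DTheory Atom)
    (I : DInterp Atom) : Prop :=
  (∀ q : Lit Atom,
    I.del q = some true ↔
      (q ∈ T.facts ∨
       ∃ r ∈ T.rules, r.kind = RuleKind.strict ∧ r.head = q ∧
         kleeneAll I.del r.body = some true)) ∧
  (∀ q : Lit Atom,
    I.del q = some false ↔
      (q ∉ T.facts ∧
       ∀ r ∈ T.rules, r.kind = RuleKind.strict → r.head = q →
         kleeneAll I.del r.body = some false)) ∧
  (∀ q : Lit Atom,
    I.par q = some true ↔
      (I.del q = some true ∨
       ((∃ r ∈ T.rules, r.isSd ∧ r.head = q ∧ kleeneAll I.par r.body = some true) ∧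
        I.del q.compl = some false ∧
        ∀ s ∈ T.rules, s.head = q.compl →
          (kleeneAll I.par s.body = some false ∨
           ∃ t ∈ T.rules, t.isSd ∧ t.head = q ∧
             kleeneAll I.par t.body = some true ∧ T.sup t s)))) ∧
  (∀ q : Lit Atom,
    I.par q = some false ↔
      (I.del q = some false ∧
       ((∀ r ∈ T.rules, r.isSd → r.head = q → kleeneAll I.par r.body = some false) ∨
        I.del q.compl = some true ∨
        (∃ s ∈ T.rules, s.head = q.compl ∧ kleeneAll I.par s.body = some true ∧
          ∀ t ∈ T.rules, t.isSd → t.head = q →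
            (kleeneAll I.par t.body = some false ∨ ¬ T.sup t s)))))

/-- A defeasible model of `T`: a defeasible interpretation (coherent pair of partial
functions) satisfying the four model conditions. -/
def IsModel {Atom : Type} (T : DTheory Atom) (I : DInterp Atom) : Prop :=
  I.Coherent ∧ ModelConditions T I

/-- A conclusion holds in an interpretation. -/
def DLHolds {Atom : Type} (I : DInterp Atom) : Concl Atom → Prop
  | .plusDelta q => I.del q = some true
  | .minusDelta q => I.del q = some false
  | .plusPartial q => I.par q = some true
  | .minusPartial q => I.par q = some false

/-!
Read on sets of conclusions, the inference rules form a monotone operator whose fixed points are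
exactly the sets of conclusions holding in a model. The set of provable conclusions is such a fixed
point: as the theory is finite, licensing a conclusion depends on finitely many premises only, and
finitely many provable conclusions occur together in one derivation. It is the set of conclusions of
an interpretation because it is consistent: the rules for `-` are the strong negations of those for
`+`. Hence a conclusion holding in every model holds in the one where only the provable ones do.
-/

section

variable {Atom : Type} {T : DTheory Atom} {S S' : Set (Concl Atom)} {P Q : List (Concl Atom)}
  {I : DInterp Atom} {c : Concl Atom} {r : DRule Atom}

namespace Concl

/-- The literal of a tagged literal. -/
def lit : Concl Atom → Lit Atom
  | plusDelta q | minusDelta q | plusPartial q | minusPartial q => q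

/-- The opposite conclusion: the same literal, tagged at the same level with the other sign. -/
def opposite : Concl Atom → Concl Atom
  | plusDelta q => minusDelta q
  | minusDelta q => plusDelta q
  | plusPartial q => minusPartial q
  | minusPartial q => plusPartial q

theorem forall_iff {p : Concl Atom → Prop} :
    (∀ c, p c) ↔ (∀ q, p (plusDelta q)) ∧ (∀ q, p (minusDelta q)) ∧
      (∀ q, p (plusPartial q)) ∧ ∀ q, p (minusPartial q) :=
  ⟨fun h => ⟨fun q => h _, fun q => h _, fun q => h _, fun q => h _⟩,
    fun ⟨hpd, hmd, hpp, hmp⟩ c => by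
      cases c with
      | plusDelta q => exact hpd q
      | minusDelta q => exact hmd q
      | plusPartial q => exact hpp q
      | minusPartial q => exact hmp q⟩

theorem finite_setOf_lit_mem {A : Set (Lit Atom)} (hA : A.Finite) :
    {c : Concl Atom | c.lit ∈ A}.Finite := by
  refine ((hA.image plusDelta).union <| (hA.image minusDelta).union <|
    (hA.image plusPartial).union (hA.image minusPartial)).subset fun c hc => ?_
  cases c with
  | plusDelta q => exact .inl ⟨q, hc, rfl⟩
  | minusDelta q => exact .inr (.inl ⟨q, hc, rfl⟩)
  | plusPartial q => exact .inr (.inr (.inl ⟨q, hc, rfl⟩))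
  | minusPartial q => exact .inr (.inr (.inr ⟨q, hc, rfl⟩))

end Concl

/-- A set of conclusions is consistent if it contains no two opposite conclusions. -/
def Consistent (S : Set (Concl Atom)) : Prop :=
  ∀ c ∈ S, c.opposite ∉ S

theorem consistent_iff :
    Consistent S ↔ ∀ q, ¬ (.plusDelta q ∈ S ∧ .minusDelta q ∈ S) ∧
      ¬ (.plusPartial q ∈ S ∧ .minusPartial q ∈ S) := by
  simp only [Consistent, Concl.forall_iff, Concl.opposite]
  grind

namespace DRule

/-- A rule is applicable, relative to a set of accepted conclusions, if its whole body is
defeasibly proved. -/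
def Applicable (S : Set (Concl Atom)) (r : DRule Atom) : Prop :=
  ∀ a ∈ r.body, .plusPartial a ∈ S

/-- A rule is discarded, relative to a set of accepted conclusions, if some member of its body is
defeasibly refuted. -/
def Discarded (S : Set (Concl Atom)) (r : DRule Atom) : Prop :=
  ∃ a ∈ r.body, .minusPartial a ∈ S

theorem Applicable.not_discarded (hS : Consistent S) (happ : r.Applicable S) :
    ¬ r.Discarded S :=
  fun ⟨a, ha, hdis⟩ => hS _ (happ a ha) hdis

end DRule

namespace DTheory

/-- The one-step consequence operator: the conclusions which the inference rules license from the
accepted conclusions `S`. It extends `Licensed` from lists to arbitrary sets of conclusions. -/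
def consequences (T : DTheory Atom) (S : Set (Concl Atom)) : Set (Concl Atom) :=
  {c | match c with
    | .plusDelta q =>
        q ∈ T.facts ∨
        ∃ r ∈ T.rules, r.kind = RuleKind.strict ∧ r.head = q ∧ ∀ a ∈ r.body, .plusDelta a ∈ S
    | .minusDelta q =>
        q ∉ T.facts ∧
        ∀ r ∈ T.rules, r.kind = RuleKind.strict → r.head = q → ∃ a ∈ r.body, .minusDelta a ∈ S
    | .plusPartial q =>
        .plusDelta q ∈ S ∨
        ((∃ r ∈ T.rules, r.isSd ∧ r.head = q ∧ r.Applicable S) ∧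
         .minusDelta q.compl ∈ S ∧
         ∀ s ∈ T.rules, s.head = q.compl →
           (s.Discarded S ∨ ∃ t ∈ T.rules, t.isSd ∧ t.head = q ∧ T.sup t s ∧ t.Applicable S))
    | .minusPartial q =>
        .minusDelta q ∈ S ∧
        ((∀ r ∈ T.rules, r.isSd → r.head = q → r.Discarded S) ∨
         .plusDelta q.compl ∈ S ∨
         ∃ s ∈ T.rules, s.head = q.compl ∧ s.Applicable S ∧
           ∀ t ∈ T.rules, t.isSd → t.head = q → (t.Discarded S ∨ ¬ T.sup t s))}

/-- The conclusions on which the licensing of `c` can depend. -/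
def premises (T : DTheory Atom) (c : Concl Atom) : Set (Concl Atom) :=
  {d | d.lit ∈ {c.lit, c.lit.compl} ∪ ⋃ r ∈ T.rules, (r.body : Set (Lit Atom))}

theorem finite_premises (T : DTheory Atom) (c : Concl Atom) : (T.premises c).Finite :=
  Concl.finite_setOf_lit_mem <| (Set.toFinite _).union <|
    T.rules.finite_toSet.biUnion fun r _ => r.body.finite_toSet

theorem mem_premises_of_mem_body {d : Concl Atom} (hr : r ∈ T.rules) (hd : d.lit ∈ r.body) :
    d ∈ T.premises c :=
  .inr (Set.mem_biUnion hr hd)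

theorem mem_consequences_of_inter_premises_subset (hsub : S ∩ T.premises c ⊆ S')
    (hc : c ∈ T.consequences S) : c ∈ T.consequences S' := by
  have of_lit {d : Concl Atom} (hlit : d.lit = c.lit) (hd : d ∈ S) : d ∈ S' :=
    hsub ⟨hd, .inl (.inl hlit)⟩
  have of_compl {d : Concl Atom} (hlit : d.lit = c.lit.compl) (hd : d ∈ S) : d ∈ S' :=
    hsub ⟨hd, .inl (.inr hlit)⟩
  have of_body {d : Concl Atom} {r : DRule Atom} (hr : r ∈ T.rules) (hlit : d.lit ∈ r.body)
      (hd : d ∈ S) : d ∈ S' :=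
    hsub ⟨hd, mem_premises_of_mem_body hr hlit⟩
  have applicable {r : DRule Atom} (hr : r ∈ T.rules) (h : r.Applicable S) : r.Applicable S' :=
    fun a ha => of_body hr ha (h a ha)
  have discarded {r : DRule Atom} (hr : r ∈ T.rules) : r.Discarded S → r.Discarded S' :=
    fun ⟨a, ha, hd⟩ => ⟨a, ha, of_body hr ha hd⟩
  cases c with
  | plusDelta q =>
    exact hc.imp_right fun ⟨r, hr, hkind, hhead, hbody⟩ =>
      ⟨r, hr, hkind, hhead, fun a ha => of_body hr ha (hbody a ha)⟩
  | minusDelta q =>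
    refine ⟨hc.1, fun r hr hkind hhead => ?_⟩
    obtain ⟨a, ha, hd⟩ := hc.2 r hr hkind hhead
    exact ⟨a, ha, of_body hr ha hd⟩
  | plusPartial q =>
    refine hc.imp (of_lit rfl) fun ⟨⟨r, hr, hsd, hhead, happ⟩, hcompl, hattack⟩ =>
      ⟨⟨r, hr, hsd, hhead, applicable hr happ⟩, of_compl rfl hcompl, fun s hs hshead => ?_⟩
    exact (hattack s hs hshead).imp (discarded hs) fun ⟨t, ht, htsd, hthead, hsup, htapp⟩ =>
      ⟨t, ht, htsd, hthead, hsup, applicable ht htapp⟩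
  | minusPartial q =>
    refine ⟨of_lit rfl hc.1, hc.2.imp (fun h r hr hsd hhead => discarded hr (h r hr hsd hhead))
      (Or.imp (of_compl rfl) fun ⟨s, hs, hshead, happ, hdefend⟩ => ?_)⟩
    exact ⟨s, hs, hshead, applicable hs happ, fun t ht htsd hthead =>
      (hdefend t ht htsd hthead).imp_left (discarded ht)⟩

theorem consequences_mono (T : DTheory Atom) : Monotone T.consequences :=
  fun _ _ hsub _ => mem_consequences_of_inter_premises_subset (Set.inter_subset_left.trans hsub)

end DTheory

theorem Consistent.consequences (hS : Consistent S) : Consistent (T.consequences S) := by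
  refine consistent_iff.2 fun q => ⟨?_, ?_⟩
  · rintro ⟨hfact | ⟨r, hr, hkind, hhead, hbody⟩, hnfact, hfail⟩
    · exact hnfact hfact
    · obtain ⟨a, ha, hneg⟩ := hfail r hr hkind hhead
      exact hS _ (hbody a ha) hneg
  · rintro ⟨hpos | ⟨⟨r, hr, hsd, hhead, happ⟩, hcompl, hattack⟩, hneg, hfail⟩
    · exact hS _ hpos hneg
    · rcases hfail with hdis | hcompl' | ⟨s, hs, hshead, hsapp, hdefend⟩
      · exact happ.not_discarded hS (hdis r hr hsd hhead)
      · exact hS _ hcompl' hcompl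
      · rcases hattack s hs hshead with hsdis | ⟨t, ht, htsd, hthead, hsup, htapp⟩
        · exact hsapp.not_discarded hS hsdis
        · exact (hdefend t ht htsd hthead).elim (htapp.not_discarded hS) (· hsup)

theorem licensed_iff_mem_consequences :
    Licensed T P c ↔ c ∈ T.consequences {d | d ∈ P} := by
  cases c <;> rfl

theorem Licensed.mono (hsub : P ⊆ Q) (h : Licensed T P c) : Licensed T Q c :=
  licensed_iff_mem_consequences.2 <|
    T.consequences_mono (fun _ hd => hsub hd) (licensed_iff_mem_consequences.1 h)

namespace DLDerivation

theorem nil : DLDerivation T [] :=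
  fun i => i.elim0

theorem concat_iff : DLDerivation T (P ++ [c]) ↔ DLDerivation T P ∧ Licensed T P c := by
  simp only [DLDerivation, Fin.forall_iff, List.get_eq_getElem, List.length_append,
    List.length_singleton, Nat.forall_lt_succ_right']
  refine and_congr (forall₂_congr fun i hi => ?_) (by simp)
  rw [List.take_append_of_le_length hi.le, List.getElem_append_left hi]

theorem append (hP : DLDerivation T P) (hQ : DLDerivation T Q) : DLDerivation T (P ++ Q) := by
  induction Q using List.reverseRecOn with
  | nil => simpa using hP
  | append_singleton Q c ih =>
    obtain ⟨hQ, hc⟩ := concat_iff.1 hQ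
    rw [← List.append_assoc]
    exact concat_iff.2 ⟨ih hQ, hc.mono (List.subset_append_right P Q)⟩

theorem licensed_of_mem (hP : DLDerivation T P) (hc : c ∈ P) : Licensed T P c := by
  obtain ⟨i, rfl⟩ := List.mem_iff_get.1 hc
  exact (hP i).mono (List.take_subset _ _)

theorem proves_of_mem (hP : DLDerivation T P) (hc : c ∈ P) : DLProves T c :=
  ⟨P ++ [c], concat_iff.2 ⟨hP, hP.licensed_of_mem hc⟩, by simp⟩

theorem consistent (hP : DLDerivation T P) : Consistent {c | c ∈ P} := by
  induction P using List.reverseRecOn with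
  | nil => simp [Consistent]
  | append_singleton P c ih =>
    obtain ⟨hP, hc⟩ := concat_iff.1 hP
    have licensed : ∀ d ∈ P ++ [c], d ∈ T.consequences {d | d ∈ P} := by
      simp only [List.mem_append, List.mem_singleton, ← licensed_iff_mem_consequences]
      rintro d (hd | rfl)
      exacts [hP.licensed_of_mem hd, hc]
    exact fun d hd hopp => (ih hP).consequences d (licensed d hd) (licensed _ hopp)

end DLDerivation

namespace DTheory

/-- The set of conclusions provable in `T`. -/
def provable (T : DTheory Atom) : Set (Concl Atom) :=
  {c | DLProves T c}

theorem mem_provable_iff : c ∈ T.provable ↔ ∃ P, DLDerivation T P ∧ c ∈ P :=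
  ⟨fun ⟨P, hP, hlast⟩ => ⟨P, hP, List.mem_of_getLast? hlast⟩,
    fun ⟨_, hP, hc⟩ => hP.proves_of_mem hc⟩

theorem exists_derivation_of_finite (hS : S.Finite) (hprov : S ⊆ T.provable) :
    ∃ P, DLDerivation T P ∧ ∀ c ∈ S, c ∈ P := by
  induction S, hS using Set.Finite.induction_on with
  | empty => exact ⟨[], .nil, by simp⟩
  | @insert c S _ _ ih =>
    obtain ⟨hc, hSprov⟩ := Set.insert_subset_iff.1 hprov
    obtain ⟨P, hP, hSP⟩ := ih hSprov
    obtain ⟨Q, hQ, hcQ⟩ := mem_provable_iff.1 hc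
    refine ⟨P ++ Q, hP.append hQ, ?_⟩
    rintro d (rfl | hd)
    exacts [List.mem_append_right P hcQ, List.mem_append_left Q (hSP d hd)]

theorem consistent_provable (T : DTheory Atom) : Consistent T.provable := by
  intro c hc hopp
  obtain ⟨P, hP, hcP⟩ := mem_provable_iff.1 hc
  obtain ⟨Q, hQ, hoppQ⟩ := mem_provable_iff.1 hopp
  exact (hP.append hQ).consistent c (List.mem_append_left Q hcP) (List.mem_append_right P hoppQ)

theorem consequences_provable (T : DTheory Atom) : T.consequences T.provable = T.provable := by
  refine Set.Subset.antisymm (fun c hc => ?_) fun c hc => ?_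
  · obtain ⟨P, hP, hpremises⟩ := exists_derivation_of_finite
      ((T.finite_premises c).inter_of_right T.provable) Set.inter_subset_left
    have hlic : Licensed T P c :=
      licensed_iff_mem_consequences.2 (mem_consequences_of_inter_premises_subset hpremises hc)
    exact mem_provable_iff.2 ⟨P ++ [c], DLDerivation.concat_iff.2 ⟨hP, hlic⟩, by simp⟩
  · obtain ⟨P, hP, hcP⟩ := mem_provable_iff.1 hc
    exact T.consequences_mono (fun d hd => hP.proves_of_mem hd)
      (licensed_iff_mem_consequences.1 (hP.licensed_of_mem hcP))

end DTheory

theorem kleeneAll_eq_some_true_iff {f : Lit Atom → Option Bool} {A : Finset (Lit Atom)} :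
    kleeneAll f A = some true ↔ ∀ a ∈ A, f a = some true := by
  unfold kleeneAll
  split_ifs with hfalse htrue
  · obtain ⟨a, ha, hfa⟩ := hfalse
    simpa using ⟨a, ha, by simp [hfa]⟩
  · simpa using htrue
  · simpa using htrue

theorem kleeneAll_eq_some_false_iff {f : Lit Atom → Option Bool} {A : Finset (Lit Atom)} :
    kleeneAll f A = some false ↔ ∃ a ∈ A, f a = some false := by
  unfold kleeneAll
  split_ifs with hfalse <;> simpa using hfalse

namespace DInterp

/-- The set of conclusions holding in an interpretation. -/
def conclusions (I : DInterp Atom) : Set (Concl Atom) :=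
  {c | DLHolds I c}

open Classical in
/-- The interpretation whose values are prescribed by a set of conclusions. Positive conclusions
take precedence, so that `S` is recovered only when it is consistent. -/
noncomputable def ofConclusions (S : Set (Concl Atom)) : DInterp Atom where
  del q := if .plusDelta q ∈ S then some true else if .minusDelta q ∈ S then some false else none
  par q :=
    if .plusPartial q ∈ S then some true else if .minusPartial q ∈ S then some false else none

theorem conclusions_ofConclusions (hS : Consistent S) : (ofConclusions S).conclusions = S := by
  rw [consistent_iff] at hS
  refine Set.ext (Concl.forall_iff.2 ⟨?_, ?_, ?_, ?_⟩) <;> intro q <;>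
    simp only [conclusions, Set.mem_ofPred_eq, DLHolds, ofConclusions] <;> grind

theorem modelConditions_iff :
    ModelConditions T I ↔ T.consequences I.conclusions = I.conclusions := by
  simp only [ModelConditions, kleeneAll_eq_some_true_iff, kleeneAll_eq_some_false_iff,
    Set.ext_iff, Concl.forall_iff, iff_comm (b := _ ∈ I.conclusions), and_comm (b := T.sup _ _)]
  rfl

theorem coherent_of_consequences_eq (hfix : T.consequences I.conclusions = I.conclusions) :
    I.Coherent := by
  refine ⟨fun q hq => ?_, fun q hq => ?_⟩
  · have hpar : .plusPartial q ∈ T.consequences I.conclusions := .inl hq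
    rwa [hfix] at hpar
  · have hpar : .minusPartial q ∈ I.conclusions := hq
    rw [← hfix] at hpar
    exact hpar.1

theorem isModel_iff : IsModel T I ↔ T.consequences I.conclusions = I.conclusions :=
  ⟨fun h => modelConditions_iff.1 h.2,
    fun hfix => ⟨coherent_of_consequences_eq hfix, modelConditions_iff.2 hfix⟩⟩

end DInterp

end

theorem DL_completeness_general {Atom : Type} (T : DTheory Atom) (c : Concl Atom)
    (h : ∀ I : DInterp Atom, IsModel T I → DLHolds I c) : DLProves T c := by
  have hcanon : (DInterp.ofConclusions T.provable).conclusions = T.provable :=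
    DInterp.conclusions_ofConclusions T.consistent_provable
  have hmodel : IsModel T (DInterp.ofConclusions T.provable) := by
    rw [DInterp.isModel_iff, hcanon, T.consequences_provable]
  have hmem : c ∈ (DInterp.ofConclusions T.provable).conclusions := h _ hmodel
  rwa [hcanon] at hmem

/-- Completeness of DL: every conclusion holding in all defeasible models is provable. -/
theorem DL_completeness {Atom : Type} [Countable Atom] [DecidableEq Atom]
    (T : DTheory Atom) (hacyc : SupAcyclic T) (c : Concl Atom)
    (h : ∀ I : DInterp Atom, IsModel T I → DLHolds I c) :
    DLProves T c :=
  DL_completeness_general T c h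
end

section
/- Paraconsistency of DL: let a and b be distinct atoms and let T be the propositional defeasible theory with facts F={a, ¬a}, a single strict rule r: {b} → b, and empty superiority relation. Then T ⊢ +Δa, T ⊢ +Δ¬a, T ⊢ +∂a, and T ⊢ +∂¬a, but none of +Δb, -Δb, +∂b, -∂b is provable in T; in particular, the inconsistency concerning a does not make b provable (no ex falso quodlibet). -/
/-!
A fact is proved outright, and `+∂q` needs only `+Δq`, so complementary facts are both provable:
the presence of `~q` is never consulted. About the head of the loop `b → b` nothing can be said.
The first occurrence of `+Δb` or `+∂b` in a derivation would need an earlier one, since the only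
rule for `b` has `b` in its body; the first occurrence of `-Δb` would need an earlier one because
that rule is discarded only by `-Δb`; and `-∂b` presupposes `-Δb`.
-/

section Derivations

variable {Atom : Type} {T : DTheory Atom} {P : List (Concl Atom)} {c : Concl Atom} {q : Lit Atom}

theorem dlDerivation_nil : DLDerivation T [] := fun i => i.elim0

theorem dlDerivation_concat :
    DLDerivation T (P ++ [c]) ↔ DLDerivation T P ∧ Licensed T P c := by
  have take_of_lt {i : ℕ} (hi : i < P.length) : (P ++ [c]).take i = P.take i :=
    List.take_append_of_le_length hi.le
  constructor
  · refine fun h => ⟨fun i => ?_, ?_⟩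
    · simpa [take_of_lt i.isLt] using h (i.castLE (by simp))
    · simpa using h ⟨P.length, by simp⟩
  · rintro ⟨hP, hc⟩ ⟨i, hi⟩
    obtain hlt | rfl : i < P.length ∨ i = P.length := by
      rw [List.length_append, List.length_singleton] at hi
      omega
    · simpa [take_of_lt hlt, hlt] using hP ⟨i, hlt⟩
    · simpa using hc

theorem dlProves_iff_exists_licensed :
    DLProves T c ↔ ∃ P, DLDerivation T P ∧ Licensed T P c := by
  constructor
  · rintro ⟨P, hP, hlast⟩
    obtain ⟨P', rfl⟩ := List.getLast?_eq_some_iff.mp hlast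
    exact ⟨P', dlDerivation_concat.mp hP⟩
  · rintro ⟨P, hP⟩
    exact ⟨P ++ [c], dlDerivation_concat.mpr hP, List.getLast?_concat⟩

theorem DLDerivation.dlProves_of_mem (hP : DLDerivation T P) (hc : c ∈ P) : DLProves T c := by
  induction P using List.reverseRecOn with
  | nil => simp at hc
  | append_singleton P d ih =>
    obtain ⟨hP', hd⟩ := dlDerivation_concat.mp hP
    rw [List.mem_append, List.mem_singleton] at hc
    obtain hcP | rfl := hc
    · exact ih hP' hcP
    · exact dlProves_iff_exists_licensed.mpr ⟨P, hP', hd⟩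

theorem DLProves.induction {p : Concl Atom → Prop} (hc : DLProves T c)
    (licensed : ∀ P d, (∀ e ∈ P, DLProves T e ∧ p e) → Licensed T P d → p d) : p c := by
  have forall_mem (P : List (Concl Atom)) (hP : DLDerivation T P) : ∀ d ∈ P, p d := by
    induction P using List.reverseRecOn with
    | nil => simp
    | append_singleton P d ih =>
      obtain ⟨hP', hd⟩ := dlDerivation_concat.mp hP
      intro e he
      rw [List.mem_append, List.mem_singleton] at he
      obtain heP | rfl := he
      · exact ih hP' e heP
      · exact licensed P e (fun f hf => ⟨hP'.dlProves_of_mem hf, ih hP' f hf⟩) hd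
  obtain ⟨P, hP, hlast⟩ := hc
  exact forall_mem P hP c (List.mem_of_getLast? hlast)

theorem dlProves_plusDelta_of_mem_facts (hq : q ∈ T.facts) : DLProves T (.plusDelta q) :=
  dlProves_iff_exists_licensed.mpr ⟨[], dlDerivation_nil, .inl hq⟩

theorem DLProves.plusPartial_of_plusDelta (h : DLProves T (.plusDelta q)) :
    DLProves T (.plusPartial q) := by
  obtain ⟨P, hP, hlast⟩ := h
  exact dlProves_iff_exists_licensed.mpr ⟨P, hP, .inl (List.mem_of_getLast? hlast)⟩

theorem DLProves.minusDelta_of_minusPartial (h : DLProves T (.minusPartial q)) :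
    DLProves T (.minusDelta q) := by
  obtain ⟨P, hP, hmem, -⟩ := dlProves_iff_exists_licensed.mp h
  exact hP.dlProves_of_mem hmem

end Derivations

namespace DTheory

variable {Atom : Type} {T : DTheory Atom} {U : Set (Lit Atom)} {q : Lit Atom}

/-- Unfounded sets of literals, as in the well-founded semantics of logic programs: every
derivation of a member of `U` from facts by strict or defeasible rules passes through `U` again.
Attacks by rules for complementary literals are disregarded. -/
def IsUnfounded (T : DTheory Atom) (U : Set (Lit Atom)) : Prop :=
  ∀ q ∈ U, q ∉ T.facts ∧ ∀ r ∈ T.rules, r.isSd → r.head = q → ∃ a ∈ r.body, a ∈ U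

/-- Self-supporting sets of literals, the post-fixed points of the one-step consequence operator
of facts and strict rules: every non-fact in `U` is the head of a strict rule with body inside
`U`, so no derivation can be the first to refute a member of `U`. -/
def IsSelfSupporting (T : DTheory Atom) (U : Set (Lit Atom)) : Prop :=
  ∀ q ∈ U, q ∈ T.facts ∨ ∃ r ∈ T.rules, r.kind = .strict ∧ r.head = q ∧ ∀ a ∈ r.body, a ∈ U

theorem IsUnfounded.not_dlProves_plusDelta (hU : T.IsUnfounded U) (hq : q ∈ U) :
    ¬ DLProves T (.plusDelta q) := by
  intro h
  refine h.induction (p := fun c => ∀ q ∈ U, c ≠ .plusDelta q) ?_ q hq rfl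
  rintro P _ hP hlic q hq rfl
  obtain hfact | ⟨r, hr, hstrict, hhead, hbody⟩ := hlic
  · exact (hU q hq).1 hfact
  · obtain ⟨a, ha, haU⟩ := (hU q hq).2 r hr (.inl hstrict) hhead
    exact (hP _ (hbody a ha)).2 a haU rfl

theorem IsUnfounded.not_dlProves_plusPartial (hU : T.IsUnfounded U) (hq : q ∈ U) :
    ¬ DLProves T (.plusPartial q) := by
  intro h
  refine h.induction (p := fun c => ∀ q ∈ U, c ≠ .plusPartial q) ?_ q hq rfl
  rintro P _ hP hlic q hq rfl
  obtain hdelta | ⟨⟨r, hr, hsd, hhead, hbody⟩, -⟩ := hlic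
  · exact hU.not_dlProves_plusDelta hq (hP _ hdelta).1
  · obtain ⟨a, ha, haU⟩ := (hU q hq).2 r hr hsd hhead
    exact (hP _ (hbody a ha)).2 a haU rfl

theorem IsSelfSupporting.not_dlProves_minusDelta (hU : T.IsSelfSupporting U) (hq : q ∈ U) :
    ¬ DLProves T (.minusDelta q) := by
  intro h
  refine h.induction (p := fun c => ∀ q ∈ U, c ≠ .minusDelta q) ?_ q hq rfl
  rintro P _ hP hlic q hq rfl
  obtain ⟨hfact, hrefuted⟩ := hlic
  obtain hmem | ⟨r, hr, hstrict, hhead, hbody⟩ := hU q hq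
  · exact hfact hmem
  · obtain ⟨a, ha, haP⟩ := hrefuted r hr hstrict hhead
    exact (hP _ haP).2 a (hbody a ha) rfl

theorem IsSelfSupporting.not_dlProves_minusPartial (hU : T.IsSelfSupporting U) (hq : q ∈ U) :
    ¬ DLProves T (.minusPartial q) :=
  fun h => hU.not_dlProves_minusDelta hq h.minusDelta_of_minusPartial

theorem isUnfounded_singleton (hfact : q ∉ T.facts)
    (hrules : ∀ r ∈ T.rules, r.isSd → r.head = q → q ∈ r.body) : T.IsUnfounded {q} := by
  simpa [IsUnfounded] using ⟨hfact, hrules⟩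

theorem isSelfSupporting_singleton (hloop : ⟨.strict, {q}, q⟩ ∈ T.rules) :
    T.IsSelfSupporting {q} := by
  rintro _ rfl
  exact .inr ⟨_, hloop, rfl, rfl, by simp⟩

end DTheory

theorem DL_paraconsistency_general {Atom : Type} {T : DTheory Atom} {p q : Lit Atom}
    (hp : p ∈ T.facts) (hp_compl : p.compl ∈ T.facts) (hq : q ∉ T.facts)
    (hloop : ⟨.strict, {q}, q⟩ ∈ T.rules)
    (hrules : ∀ r ∈ T.rules, r.isSd → r.head = q → q ∈ r.body) :
    (DLProves T (.plusDelta p) ∧ DLProves T (.plusDelta p.compl) ∧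
      DLProves T (.plusPartial p) ∧ DLProves T (.plusPartial p.compl)) ∧
    (¬ DLProves T (.plusDelta q) ∧ ¬ DLProves T (.minusDelta q) ∧
      ¬ DLProves T (.plusPartial q) ∧ ¬ DLProves T (.minusPartial q)) := by
  have hΔp := dlProves_plusDelta_of_mem_facts hp
  have hΔp_compl := dlProves_plusDelta_of_mem_facts hp_compl
  have unfounded := DTheory.isUnfounded_singleton hq hrules
  have selfSupporting := DTheory.isSelfSupporting_singleton hloop
  have hmem : q ∈ ({q} : Set (Lit Atom)) := rfl
  exact ⟨⟨hΔp, hΔp_compl, hΔp.plusPartial_of_plusDelta, hΔp_compl.plusPartial_of_plusDelta⟩,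
    unfounded.not_dlProves_plusDelta hmem, selfSupporting.not_dlProves_minusDelta hmem,
    unfounded.not_dlProves_plusPartial hmem, selfSupporting.not_dlProves_minusPartial hmem⟩

/-- Paraconsistency of DL: with facts {a, ¬a} and the single strict rule b → b,
both a and ¬a are definitely and defeasibly provable, but none of the four
conclusions about b is provable: no ex falso quodlibet. -/
theorem DL_paraconsistency {Atom : Type} [Countable Atom] [DecidableEq Atom]
    (a b : Atom) (hab : a ≠ b) (T : DTheory Atom)
    (hT : T = ⟨{Lit.pos a, Lit.neg a},
               {⟨RuleKind.strict, {Lit.pos b}, Lit.pos b⟩},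
               fun _ _ => False⟩) :
    (DLProves T (Concl.plusDelta (Lit.pos a)) ∧
     DLProves T (Concl.plusDelta (Lit.neg a)) ∧
     DLProves T (Concl.plusPartial (Lit.pos a)) ∧
     DLProves T (Concl.plusPartial (Lit.neg a))) ∧
    (¬ DLProves T (Concl.plusDelta (Lit.pos b)) ∧
     ¬ DLProves T (Concl.minusDelta (Lit.pos b)) ∧
     ¬ DLProves T (Concl.plusPartial (Lit.pos b)) ∧
     ¬ DLProves T (Concl.minusPartial (Lit.pos b))) := by
  subst hT
  exact DL_paraconsistency_general (p := .pos a) (by simp) (by simp [Lit.compl])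
    (by simpa using hab.symm) (by simp) (by simp)
end
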